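/- Let 0 < μ < 2, ε ∈ [1 − μ²/4, 2 − μ], G₀ > 0, M ≥ 0, K > 0. Define λ(η) = (1 − μ/2)⁻¹·((1 − ε)/η + η − μ), G(λ) = ((1 − λ/2)·G₀ + λ·(G₀/μ + M))², Ψ(η) = (η² + 1)·λ(η)² + η³/λ(η), and Φ(η) = (1 + λ(η)³)·η²·G(λ(η)) + K·Ψ(η). Set η₃ = (μ + √(μ² − 4(1 − ε)))/2. Then η₃ < 1 when ε < 2 − μ, and Φ is convex on the open interval (η₃, 1). -/

import Mathlib

/-- The weighting coefficient `λ(η)` obtained from the consistency constraint. -/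
noncomputable def lamFn (μ ε η : ℝ) : ℝ :=
  (1 - μ / 2)⁻¹ * ((1 - ε) / η + η - μ)

/-- `G(λ) = ((1 − λ/2)G₀ + λ(G₀/μ + M))²`. -/
noncomputable def GFn (G₀ M μ lam : ℝ) : ℝ :=
  ((1 - lam / 2) * G₀ + lam * (G₀ / μ + M)) ^ 2

/-- `Ψ(η) = (η² + 1)λ(η)² + η³/λ(η)`. -/
noncomputable def PsiFn (μ ε η : ℝ) : ℝ :=
  (η ^ 2 + 1) * (lamFn μ ε η) ^ 2 + η ^ 3 / lamFn μ ε η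

/-- The convergence-bias objective `Φ(η) = (1 + λ(η)³)·η²·G(λ(η)) + K·Ψ(η)`. -/
noncomputable def PhiFn (μ ε G₀ M K η : ℝ) : ℝ :=
  (1 + (lamFn μ ε η) ^ 3) * η ^ 2 * GFn G₀ M μ (lamFn μ ε η) + K * PsiFn μ ε η

/-! On `(η₃, ∞)` the functions `η`, `η * λ`, `λ ^ 2` and `η * λ ^ 2` are convex, monotone and
nonnegative, although `λ` itself is concave when `ε > 1`. Such functions form a semiring, and every
term of `Φ` except `K * η ^ 3 / λ` lies in the semiring generated by these four and the nonnegative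
constants. Up to a constant, `η ^ 3 / λ` is `η ^ 4 / ((η - a) * (η - b))` with `a` and `b` the zeros
of `λ`. This is the square of `η ^ 2 / √((η - a) * (η - b))`, which is convex because the geometric
mean in the denominator is concave. -/

open Set

section ConvexMonotone

variable {𝕜 E : Type*} [Field 𝕜] [LinearOrder 𝕜] [IsStrictOrderedRing 𝕜]

lemma convexOn_sq_div [AddCommMonoid E] [SMul 𝕜 E] {s : Set E} {f g : E → 𝕜}
    (hf : ConvexOn 𝕜 s f) (hf₀ : ∀ x ∈ s, 0 ≤ f x) (hg : ConcaveOn 𝕜 s g)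
    (hg₀ : ∀ x ∈ s, 0 < g x) : ConvexOn 𝕜 s (fun x ↦ f x ^ 2 / g x) := by
  -- `u ^ 2 / v` is the supremum over `m ≥ 0` of `2 * m * u - m ^ 2 * v`, attained at `m = u / v`.
  have supporting_line (m : 𝕜) {x : E} (hx : x ∈ s) :
      2 * m * f x - m ^ 2 * g x ≤ f x ^ 2 / g x := by
    rw [le_div_iff₀ (hg₀ x hx)]
    linarith [sq_nonneg (f x - m * g x)]
  refine ⟨hf.1, fun x hx y hy a b ha hb hab ↦ ?_⟩
  have hz := hf.1 hx hy ha hb hab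
  have hfz := hf.2 hx hy ha hb hab
  have hgz := hg.2 hx hy ha hb hab
  have hgz₀ := hg₀ _ hz
  set z := a • x + b • y
  set m := f z / g z with hm
  have hm₀ : 0 ≤ m := div_nonneg (hf₀ z hz) hgz₀.le
  simp only [smul_eq_mul] at hfz hgz ⊢
  calc
    f z ^ 2 / g z = 2 * m * f z - m ^ 2 * g z := by rw [hm]; field_simp; ring
    _ ≤ 2 * m * (a * f x + b * f y) - m ^ 2 * (a * g x + b * g y) := by gcongr
    _ = a * (2 * m * f x - m ^ 2 * g x) + b * (2 * m * f y - m ^ 2 * g y) := by ring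
    _ ≤ a * (f x ^ 2 / g x) + b * (f y ^ 2 / g y) := by
      gcongr <;> exact supporting_line m ‹_›

variable [AddCommGroup E] [LinearOrder E] [Module 𝕜 E] {s : Set E}

/-- The semiring of functions that are convex, monotone and nonnegative on the convex set `s`;
their behaviour off `s` is unconstrained. -/
def convexMonotone (hs : Convex 𝕜 s) : Subsemiring (E → 𝕜) where
  carrier := {f | ConvexOn 𝕜 s f ∧ MonotoneOn f s ∧ ∀ ⦃x⦄, x ∈ s → 0 ≤ f x}
  zero_mem' := ⟨convexOn_const 0 hs, monotoneOn_const, fun _ _ ↦ le_rfl⟩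
  one_mem' := ⟨convexOn_const 1 hs, monotoneOn_const, fun _ _ ↦ zero_le_one⟩
  add_mem' := fun ⟨hf, hfm, hf₀⟩ ⟨hg, hgm, hg₀⟩ ↦
    ⟨hf.add hg, hfm.add hgm, fun _ hx ↦ add_nonneg (hf₀ hx) (hg₀ hx)⟩
  mul_mem' := fun ⟨hf, hfm, hf₀⟩ ⟨hg, hgm, hg₀⟩ ↦
    ⟨hf.mul hg hf₀ hg₀ (hfm.monovaryOn hgm), hfm.mul hgm hf₀ hg₀,
      fun _ hx ↦ mul_nonneg (hf₀ hx) (hg₀ hx)⟩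

lemma mem_convexMonotone {hs : Convex 𝕜 s} {f : E → 𝕜} :
    f ∈ convexMonotone hs ↔ ConvexOn 𝕜 s f ∧ MonotoneOn f s ∧ ∀ ⦃x⦄, x ∈ s → 0 ≤ f x :=
  Iff.rfl

lemma const_mem_convexMonotone (hs : Convex 𝕜 s) {r : 𝕜} (hr : 0 ≤ r) :
    Function.const E r ∈ convexMonotone hs :=
  ⟨convexOn_const r hs, monotoneOn_const, fun _ _ ↦ hr⟩

lemma mem_convexMonotone_congr {hs : Convex 𝕜 s} {f g : E → 𝕜}
    (hf : f ∈ convexMonotone hs) (hfg : EqOn f g s) : g ∈ convexMonotone hs :=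
  ⟨hf.1.congr hfg, hf.2.1.congr hfg, fun _ hx ↦ hfg hx ▸ hf.2.2 hx⟩

lemma id_sub_const_mem_convexMonotone {a b : 𝕜} (hba : b ≤ a) :
    (fun x ↦ x - b) ∈ convexMonotone (convex_Ioi (𝕜 := 𝕜) a) :=
  ⟨(convexOn_id (convex_Ioi a)).sub (concaveOn_const b (convex_Ioi a)),
    fun _ _ _ _ h ↦ sub_le_sub_right h b, fun _ hx ↦ sub_nonneg.2 (hba.trans (le_of_lt hx))⟩

end ConvexMonotone

lemma concaveOn_sqrt_mul {E : Type*} [AddCommMonoid E] [SMul ℝ E] {s : Set E} {f g : E → ℝ}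
    (hf : ConcaveOn ℝ s f) (hf₀ : ∀ x ∈ s, 0 ≤ f x) (hg : ConcaveOn ℝ s g)
    (hg₀ : ∀ x ∈ s, 0 ≤ g x) : ConcaveOn ℝ s (fun x ↦ √(f x * g x)) := by
  refine ⟨hf.1, fun x hx y hy a b ha hb hab ↦ ?_⟩
  have hfx := hf₀ x hx
  have hfy := hf₀ y hy
  have hfz₀ := hf₀ _ (hf.1 hx hy ha hb hab)
  have hgx := hg₀ x hx
  have hgy := hg₀ y hy
  have hfz : a * f x + b * f y ≤ f (a • x + b • y) := hf.2 hx hy ha hb hab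
  have hgz : a * g x + b * g y ≤ g (a • x + b • y) := hg.2 hx hy ha hb hab
  have sqrt_scale {r u v : ℝ} (hr : 0 ≤ r) (hu : 0 ≤ u) : r * √(u * v) = √(r * u) * √(r * v) := by
    rw [← Real.sqrt_mul (mul_nonneg hr hu), mul_mul_mul_comm, Real.sqrt_mul (mul_self_nonneg r),
      Real.sqrt_mul_self hr]
  have cauchy_schwarz := Real.sum_sqrt_mul_sqrt_le Finset.univ
    (f := ![a * f x, b * f y]) (g := ![a * g x, b * g y])
    (by simpa [Fin.forall_fin_two] using ⟨by positivity, by positivity⟩)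
    (by simpa [Fin.forall_fin_two] using ⟨by positivity, by positivity⟩)
  simp only [Fin.sum_univ_two, Matrix.cons_val_zero, Matrix.cons_val_one] at cauchy_schwarz
  calc
    a * √(f x * g x) + b * √(f y * g y)
      = √(a * f x) * √(a * g x) + √(b * f y) * √(b * g y) := by
        rw [sqrt_scale ha hfx, sqrt_scale hb hfy]
    _ ≤ √(a * f x + b * f y) * √(a * g x + b * g y) := cauchy_schwarz
    _ = √((a * f x + b * f y) * (a * g x + b * g y)) := (Real.sqrt_mul (by positivity) _).symm
    _ ≤ √(f (a • x + b • y) * g (a • x + b • y)) := by gcongr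

lemma convexOn_pow_four_div_mul {E : Type*} [AddCommGroup E] [Module ℝ E] {s : Set E}
    {f g h : E → ℝ} (hf : ConvexOn ℝ s f) (hf₀ : ∀ x ∈ s, 0 ≤ f x) (hg : ConcaveOn ℝ s g)
    (hg₀ : ∀ x ∈ s, 0 < g x) (hh : ConcaveOn ℝ s h) (hh₀ : ∀ x ∈ s, 0 < h x) :
    ConvexOn ℝ s (fun x ↦ f x ^ 4 / (g x * h x)) := by
  have hsqrt := concaveOn_sqrt_mul hg (fun x hx ↦ (hg₀ x hx).le) hh (fun x hx ↦ (hh₀ x hx).le)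
  have hgh₀ (x : E) (hx : x ∈ s) : 0 < g x * h x := mul_pos (hg₀ x hx) (hh₀ x hx)
  have hdiv := convexOn_sq_div hf hf₀ hsqrt fun x hx ↦ Real.sqrt_pos.2 (hgh₀ x hx)
  refine (hdiv.pow (fun x _ ↦ by positivity) 2).congr fun x hx ↦ ?_
  simp only [Pi.pow_apply, div_pow, Real.sq_sqrt (hgh₀ x hx).le, ← pow_mul]

/-- The weighting coefficient `λ` without its factor `(1 - μ / 2)⁻¹`, written in terms of its
zeros `a` and `b`. -/
noncomputable def reducedWeight (a b η : ℝ) : ℝ :=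
  (η - a) * (η - b) / η

section ReducedWeight

variable {a b : ℝ}

lemma reducedWeight_eq_add_inv {η : ℝ} (hη : η ≠ 0) :
    reducedWeight a b η = η - (a + b) + a * b * η⁻¹ := by
  rw [reducedWeight]
  field_simp
  ring

lemma reducedWeight_pos {η : ℝ} (ha : 0 ≤ a) (hba : b ≤ a) (hη : a < η) :
    0 < reducedWeight a b η :=
  div_pos (mul_pos (sub_pos.2 hη) (sub_pos.2 (hba.trans_lt hη))) (ha.trans_lt hη)

lemma monotoneOn_reducedWeight (ha : 0 ≤ a) (hba : b ≤ a) :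
    MonotoneOn (reducedWeight a b) (Ioi a) := by
  intro x hx y hy hxy
  have hx₀ : 0 < x := ha.trans_lt hx
  have hy₀ : 0 < y := ha.trans_lt hy
  have hprod : a * b ≤ x * y := calc
    a * b ≤ a * a := by gcongr
    _ ≤ x * y := by gcongr <;> exact le_of_lt ‹_›
  have hdiff : reducedWeight a b y - reducedWeight a b x =
      (y - x) * (x * y - a * b) / (x * y) := by
    rw [reducedWeight, reducedWeight]
    field_simp
    ring
  refine sub_nonneg.1 (hdiff ▸ ?_)
  exact div_nonneg (mul_nonneg (sub_nonneg.2 hxy) (sub_nonneg.2 hprod)) (by positivity)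

lemma convexOn_reducedWeight (ha : 0 ≤ a) (hb : 0 ≤ b) :
    ConvexOn ℝ (Ioi a) (reducedWeight a b) := by
  have hinv : ConvexOn ℝ (Ioi a) fun η : ℝ ↦ η ^ (-1 : ℤ) :=
    (convexOn_zpow (-1)).subset (Ioi_subset_Ioi ha) (convex_Ioi a)
  refine (((convexOn_id (convex_Ioi a)).sub (concaveOn_const (a + b) (convex_Ioi a))).add
    (hinv.smul (mul_nonneg ha hb))).congr fun η hη ↦ ?_
  simp only [Pi.add_apply, Pi.sub_apply, id_eq, smul_eq_mul, zpow_neg_one,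
    reducedWeight_eq_add_inv (ha.trans_lt hη).ne']

lemma convexOn_reducedWeight_sq (hba : b ≤ a) (hab : 0 ≤ a + b) :
    ConvexOn ℝ (Ioi a) (reducedWeight a b ^ 2) := by
  have ha : 0 ≤ a := by linarith
  rcases le_total 0 b with hb | hb
  · exact (convexOn_reducedWeight ha hb).pow (fun η hη ↦ (reducedWeight_pos ha hba hη).le) 2
  -- The weight itself is concave when `b < 0`, but every term of its expanded square is convex.
  · have hzpow (n : ℤ) : ConvexOn ℝ (Ioi a) fun η : ℝ ↦ η ^ n :=
      (convexOn_zpow n).subset (Ioi_subset_Ioi ha) (convex_Ioi a)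
    have hsq : ConvexOn ℝ (Ioi a) fun η : ℝ ↦ (-(a + b) + η) ^ 2 :=
      (even_two.convexOn_pow.translate_right (-(a + b))).subset (subset_univ _) (convex_Ioi a)
    have hcoeff : 0 ≤ -(2 * (a * b) * (a + b)) := by
      have := mul_nonpos_of_nonneg_of_nonpos ha hb
      nlinarith
    refine (((hsq.add_const (2 * (a * b))).add ((hzpow (-1)).smul hcoeff)).add
      ((hzpow (-2)).smul (sq_nonneg (a * b)))).congr fun η hη ↦ ?_
    have hη₀ : η ≠ 0 := (ha.trans_lt hη).ne'
    simp only [Pi.add_apply, Pi.pow_apply, smul_eq_mul, reducedWeight_eq_add_inv hη₀, zpow_neg,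
      zpow_ofNat]
    field_simp
    ring

lemma convexOn_cube_div_reducedWeight (ha : 0 ≤ a) (hba : b ≤ a) :
    ConvexOn ℝ (Ioi a) fun η ↦ η ^ 3 / reducedWeight a b η := by
  have hsub (d : ℝ) : ConcaveOn ℝ (Ioi a) fun η ↦ η - d :=
    (concaveOn_id (convex_Ioi a)).sub (convexOn_const d (convex_Ioi a))
  refine (convexOn_pow_four_div_mul (convexOn_id (convex_Ioi a))
    (fun η hη ↦ ha.trans (le_of_lt hη)) (hsub a) (fun η hη ↦ sub_pos.2 hη) (hsub b)
    (fun η hη ↦ sub_pos.2 (hba.trans_lt hη))).congr fun η _ ↦ ?_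
  simp only [reducedWeight, id_eq, div_div_eq_mul_div, ← pow_succ]

lemma id_mul_reducedWeight_mem_convexMonotone (ha : 0 ≤ a) (hba : b ≤ a) :
    id * reducedWeight a b ∈ convexMonotone (convex_Ioi (𝕜 := ℝ) a) :=
  mem_convexMonotone_congr
    (mul_mem (id_sub_const_mem_convexMonotone le_rfl)
      (id_sub_const_mem_convexMonotone hba))
    fun _ hη ↦ (mul_div_cancel₀ _ (ha.trans_lt hη).ne').symm

lemma reducedWeight_sq_mem_convexMonotone (hba : b ≤ a) (hab : 0 ≤ a + b) :
    reducedWeight a b ^ 2 ∈ convexMonotone (convex_Ioi (𝕜 := ℝ) a) := by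
  have ha : 0 ≤ a := by linarith
  refine ⟨convexOn_reducedWeight_sq hba hab, ?_, fun η _ ↦ sq_nonneg (reducedWeight a b η)⟩
  exact fun x hx y hy hxy ↦ pow_le_pow_left₀ (reducedWeight_pos ha hba hx).le
    (monotoneOn_reducedWeight ha hba hx hy hxy) 2

lemma id_mul_reducedWeight_sq_mem_convexMonotone (ha : 0 ≤ a) (hba : b ≤ a) :
    id * reducedWeight a b ^ 2 ∈ convexMonotone (convex_Ioi (𝕜 := ℝ) a) := by
  obtain ⟨hconv, hmono, hnonneg⟩ :=
    mem_convexMonotone.1 (id_mul_reducedWeight_mem_convexMonotone ha hba)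
  have hweight : ∀ η ∈ Ioi a, 0 ≤ reducedWeight a b η :=
    fun η hη ↦ (reducedWeight_pos ha hba hη).le
  refine ⟨?_, ?_, fun η hη ↦ mul_nonneg (ha.trans (le_of_lt hη)) (sq_nonneg _)⟩
  · refine (convexOn_sq_div hconv hnonneg (concaveOn_id (convex_Ioi a))
      fun η hη ↦ ha.trans_lt hη).congr fun η hη ↦ ?_
    have hη₀ : η ≠ 0 := (ha.trans_lt hη).ne'
    simp only [Pi.mul_apply, Pi.pow_apply, id_eq]
    field_simp
  · rw [sq, ← mul_assoc]
    exact hmono.mul (monotoneOn_reducedWeight ha hba) hnonneg hweight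

end ReducedWeight

/- The first summand is `h ^ 2 + (t * l) ^ 2 * (t * l * h) * h` with `h = x * (A + P * (t * l))`,
and both `h` and `t * l * h` are linear in `x`, `x * l` and `x * l ^ 2`. -/
lemma objective_polynomial_mem {R : Type*} [CommSemiring R] {T : Subsemiring R}
    {x l t A P K : R} (hx : x ∈ T) (hxl : x * l ∈ T) (hl : l ^ 2 ∈ T) (hxl2 : x * l ^ 2 ∈ T)
    (ht : t ∈ T) (hA : A ∈ T) (hP : P ∈ T) (hK : K ∈ T) :
    (1 + (t * l) ^ 3) * x ^ 2 * (A + P * (t * l)) ^ 2 + K * ((x ^ 2 + 1) * (t * l) ^ 2) ∈ T := by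
  have hh : A * x + P * t * (x * l) ∈ T := add_mem (mul_mem hA hx) (mul_mem (mul_mem hP ht) hxl)
  have hlh : A * t * (x * l) + P * t ^ 2 * (x * l ^ 2) ∈ T :=
    add_mem (mul_mem (mul_mem hA ht) hxl) (mul_mem (mul_mem hP (pow_mem ht 2)) hxl2)
  have hbias : K * t ^ 2 * ((x * l) ^ 2 + l ^ 2) ∈ T :=
    mul_mem (mul_mem hK (pow_mem ht 2)) (add_mem (pow_mem hxl 2) hl)
  have htl : t ^ 2 * l ^ 2 ∈ T := mul_mem (pow_mem ht 2) hl
  convert add_mem (add_mem (pow_mem hh 2) (mul_mem (mul_mem htl hlh) hh)) hbias using 1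
  ring

lemma GFn_eq_sq (G₀ M μ l : ℝ) : GFn G₀ M μ l = (G₀ + (G₀ / μ + M - G₀ / 2) * l) ^ 2 := by
  rw [GFn]
  ring

lemma lamFn_eq_reducedWeight {μ ε a η : ℝ} (ha : a * (μ - a) = 1 - ε) (hη : η ≠ 0) :
    lamFn μ ε η = (1 - μ / 2)⁻¹ * reducedWeight a (μ - a) η := by
  rw [lamFn, reducedWeight_eq_add_inv hη, ha]
  ring

lemma convexOn_PhiFn {μ ε a G₀ M K : ℝ} (hμ₀ : 0 < μ) (hμ₂ : μ < 2) (ha : a * (μ - a) = 1 - ε)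
    (hμa : μ / 2 ≤ a) (hG : 0 ≤ G₀) (hM : 0 ≤ M) (hK : 0 ≤ K) :
    ConvexOn ℝ (Ioi a) (PhiFn μ ε G₀ M K) := by
  set t := (1 - μ / 2)⁻¹
  set P := G₀ / μ + M - G₀ / 2 with hP
  have ht₀ : 0 ≤ t := inv_nonneg.2 (by linarith)
  have hP₀ : 0 ≤ P := by
    have : G₀ / 2 ≤ G₀ / μ := by gcongr
    linarith
  have ha₀ : 0 ≤ a := by linarith
  have hba : μ - a ≤ a := by linarith
  have const_mem {r : ℝ} (hr : 0 ≤ r) :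
      Function.const ℝ r ∈ convexMonotone (convex_Ioi (𝕜 := ℝ) a) :=
    const_mem_convexMonotone _ hr
  have hid : id ∈ convexMonotone (convex_Ioi (𝕜 := ℝ) a) := by
    simpa only [sub_zero] using! id_sub_const_mem_convexMonotone ha₀
  have hpoly := objective_polynomial_mem hid (id_mul_reducedWeight_mem_convexMonotone ha₀ hba)
    (reducedWeight_sq_mem_convexMonotone hba (by linarith))
    (id_mul_reducedWeight_sq_mem_convexMonotone ha₀ hba)
    (const_mem ht₀) (const_mem hG) (const_mem hP₀) (const_mem hK)
  have hratio := (convexOn_cube_div_reducedWeight ha₀ hba).smul (mul_nonneg hK (inv_nonneg.2 ht₀))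
  refine ((mem_convexMonotone.1 hpoly).1.add hratio).congr fun η hη ↦ ?_
  have hlam : lamFn μ ε η = t * reducedWeight a (μ - a) η :=
    lamFn_eq_reducedWeight ha (ha₀.trans_lt hη).ne'
  simp only [PhiFn, PsiFn, GFn_eq_sq, hlam, ← hP, Pi.add_apply, Pi.mul_apply, Pi.pow_apply,
    Pi.one_apply, Function.const_apply, id_eq, smul_eq_mul]
  ring

/-- The larger zero `η₃` of the weighting coefficient `λ`, left end of the interval `Ω₁`. -/
noncomputable def lamZero (μ ε : ℝ) : ℝ :=
  (μ + √(μ ^ 2 - 4 * (1 - ε))) / 2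

lemma lamZero_mul_sub_lamZero {μ ε : ℝ} (hε : 1 - μ ^ 2 / 4 ≤ ε) :
    lamZero μ ε * (μ - lamZero μ ε) = 1 - ε := by
  have hsq := Real.sq_sqrt (show 0 ≤ μ ^ 2 - 4 * (1 - ε) by linarith)
  rw [lamZero]
  linarith

lemma half_le_lamZero (μ ε : ℝ) : μ / 2 ≤ lamZero μ ε := by
  rw [lamZero]
  linarith [Real.sqrt_nonneg (μ ^ 2 - 4 * (1 - ε))]

lemma lamZero_lt_one {μ ε : ℝ} (hμ : μ < 2) (hε : ε < 2 - μ) : lamZero μ ε < 1 := by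
  have hsqrt : √(μ ^ 2 - 4 * (1 - ε)) < 2 - μ := by
    rw [Real.sqrt_lt' (by linarith)]
    linarith
  rw [lamZero]
  linarith

theorem stmt15_general (μ ε G₀ M K : ℝ) (hμ0 : 0 < μ) (hμ2 : μ < 2)
    (hε1 : 1 - μ ^ 2 / 4 ≤ ε) (hG : 0 ≤ G₀) (hM : 0 ≤ M) (hK : 0 ≤ K) :
    (ε < 2 - μ → lamZero μ ε < 1) ∧ ConvexOn ℝ (Ioi (lamZero μ ε)) (PhiFn μ ε G₀ M K) :=
  ⟨lamZero_lt_one hμ2,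
    convexOn_PhiFn hμ0 hμ2 (lamZero_mul_sub_lamZero hε1) (half_le_lamZero μ ε) hG hM hK⟩

/-- Theorem 5, Ω₁ part: with `η₃ = (μ + √(μ² − 4(1 − ε)))/2`, for `μ ∈ (0,2)`,
`ε ∈ [1 − μ²/4, 2 − μ]`, `G₀ > 0`, `M ≥ 0`, `K > 0`: `η₃ < 1` when `ε < 2 − μ`, and
`Φ` is convex on `(η₃, 1)`. -/
theorem stmt15 (μ ε G₀ M K : ℝ) (hμ0 : 0 < μ) (hμ2 : μ < 2)
    (hε1 : 1 - μ ^ 2 / 4 ≤ ε) (hε2 : ε ≤ 2 - μ) (hG : 0 < G₀) (hM : 0 ≤ M) (hK : 0 < K) :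
    (ε < 2 - μ → (μ + Real.sqrt (μ ^ 2 - 4 * (1 - ε))) / 2 < 1) ∧
    ConvexOn ℝ (Set.Ioo ((μ + Real.sqrt (μ ^ 2 - 4 * (1 - ε))) / 2) 1)
      (PhiFn μ ε G₀ M K) := by
  have ⟨hlt, hconv⟩ := stmt15_general μ ε G₀ M K hμ0 hμ2 hε1 hG.le hM hK.le
  exact ⟨hlt, hconv.subset Ioo_subset_Ioi_self (convex_Ioo _ _)⟩
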